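/- Let θ : ℕ → {0,1} with θ(0) = 0, let μ₀, μ₁ ≥ 1, 0 < ω₀ < 1 ≤ ω₁, T > 0, κ_F, ρ_F, κ*, ρ* ≥ 0, 0 < α ≤ β, and δ > 0. Let W : ℕ → ℝ and s : ℕ → ℝ be sequences with s(k) ≥ 0 and α·s(k)² ≤ W(k) ≤ β·s(k)² for all k, satisfying the following conditional recursion: for every k with s(k) ≤ δ, one has W(k+1) ≤ ω_{θ(k)}·W(k) if θ(k+1) = θ(k), and W(k+1) ≤ μ_{θ(k)}·ω_{θ(k)}·W(k) if θ(k+1) ≠ θ(k). Suppose S(k) ≤ κ_F + ρ_F·kT and χ(k) ≤ (κ* + ρ*·kT)/T for all k, where χ(k) := #{j < k : θ(j) = 1} and S(k) := #{j < k : θ(j) = 0 and θ(j+1) = 1}. If ω := (μ₀μ₁)^{ρ_F T}·ω₀^{1−ρ*}·ω₁^{ρ*} < 1 and s(0) < √(α/β)·c_W^{−1/2}·δ, where c_W := (μ₀μ₁)^{κ_F}·(ω₁/ω₀)^{κ*/T}, then s(k) < δ for all k ∈ ℕ, W(k) ≤ c_W·ω^k·W(0) for all k, and s(k) → 0 as k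 → ∞. -/

import Mathlib

/-- `χ(k)`: the number of indices `j < k` with `θ j = 1` (packet-loss steps). -/
def lossCount (θ : ℕ → ℕ) (k : ℕ) : ℕ :=
  ((Finset.range k).filter fun j => θ j = 1).card

/-- `S(k)`: the number of indices `j < k` with `θ j = 0` and `θ (j+1) = 1`
(switches from the nominal mode to the packet-loss mode). -/
def switchCount (θ : ℕ → ℕ) (k : ℕ) : ℕ :=
  ((Finset.range k).filter fun j => θ j = 0 ∧ θ (j + 1) = 1).card

/-!
As long as the recursion is valid, `W k / W 0` is at most the product of the one-step gains. The
signal starts in mode `0`, so each return from mode `1` is preceded by a switch into it; charging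
`μ₀ * μ₁` for that earlier switch bounds the product by
`(μ₀ * μ₁) ^ S k * (ω₁ / ω₀) ^ χ k * ω₀ ^ k`. The average switching and loss bounds turn this
into `c_W * ω ^ k ≤ c_W`, and the initial condition says precisely that `W k ≤ c_W * W 0` forces
`s k < δ`. Hence the bound at time `k` validates the recursion at time `k`, which gives the bound
at time `k + 1`.
-/

open Finset Filter Topology

section Analysis

theorem le_prod_range_mul_of_local_step {R : Type*} [CommSemiring R] [PartialOrder R]
    [IsOrderedRing R] {V g : ℕ → R} {P : ℕ → Prop} (hg : ∀ k, 0 ≤ g k)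
    (hstep : ∀ k, P k → V (k + 1) ≤ g k * V k)
    (hP : ∀ k, V k ≤ (∏ j ∈ range k, g j) * V 0 → P k) (k : ℕ) :
    V k ≤ (∏ j ∈ range k, g j) * V 0 := by
  induction k with
  | zero => simp
  | succ k ih =>
    calc V (k + 1) ≤ g k * V k := hstep k (hP k ih)
      _ ≤ g k * ((∏ j ∈ range k, g j) * V 0) := mul_le_mul_of_nonneg_left ih (hg k)
      _ = (∏ j ∈ range (k + 1), g j) * V 0 := by rw [prod_range_succ]; ring

theorem pow_le_rpow_mul_rpow_pow {x κ ρ : ℝ} {n k : ℕ} (hx : 1 ≤ x) (hn : n ≤ κ + ρ * k) :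
    x ^ n ≤ x ^ κ * (x ^ ρ) ^ k := by
  have hx₀ : 0 < x := one_pos.trans_le hx
  calc x ^ n = x ^ (n : ℝ) := (Real.rpow_natCast x n).symm
    _ ≤ x ^ (κ + ρ * k) := Real.rpow_le_rpow_of_exponent_le hx hn
    _ = x ^ κ * (x ^ ρ) ^ k := by rw [Real.rpow_add hx₀, Real.rpow_mul_natCast hx₀.le]

theorem pow_mul_div_pow_mul_pow_le {M ω₀ ω₁ κF ρF κs ρs : ℝ} {m n k : ℕ} (hM : 1 ≤ M)
    (hω₀ : 0 < ω₀) (hω : ω₀ ≤ ω₁) (hm : m ≤ κF + ρF * k) (hn : n ≤ κs + ρs * k) :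
    M ^ m * (ω₁ / ω₀) ^ n * ω₀ ^ k ≤
      M ^ κF * (ω₁ / ω₀) ^ κs * (M ^ ρF * ω₀ ^ (1 - ρs) * ω₁ ^ ρs) ^ k := by
  have hω₁ : 0 < ω₁ := hω₀.trans_le hω
  have hrate : M ^ ρF * ω₀ ^ (1 - ρs) * ω₁ ^ ρs = M ^ ρF * (ω₁ / ω₀) ^ ρs * ω₀ := by
    rw [Real.rpow_sub hω₀, Real.rpow_one, Real.div_rpow hω₁.le hω₀.le]
    ring
  calc M ^ m * (ω₁ / ω₀) ^ n * ω₀ ^ k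
      ≤ (M ^ κF * (M ^ ρF) ^ k) * ((ω₁ / ω₀) ^ κs * ((ω₁ / ω₀) ^ ρs) ^ k) * ω₀ ^ k := by
        gcongr
        · exact pow_le_rpow_mul_rpow_pow hM hm
        · exact pow_le_rpow_mul_rpow_pow ((one_le_div hω₀).2 hω) hn
    _ = M ^ κF * (ω₁ / ω₀) ^ κs * (M ^ ρF * ω₀ ^ (1 - ρs) * ω₁ ^ ρs) ^ k := by
        rw [hrate, mul_pow, mul_pow]
        ring

theorem mul_sq_lt_mul_sq_of_lt_sqrt_div_mul {α β c δ x : ℝ} (hα : 0 ≤ α) (hβ : 0 < β)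
    (hc : 0 < c) (hx : 0 ≤ x) (h : x < √(α / β) * c ^ (-(1 : ℝ) / 2) * δ) :
    c * (β * x ^ 2) < α * δ ^ 2 := by
  have hc_sq : (c ^ (-(1 : ℝ) / 2)) ^ 2 = c⁻¹ := by
    rw [← Real.rpow_mul_natCast hc.le, ← Real.rpow_neg_one]
    norm_num
  calc c * (β * x ^ 2) < c * (β * (√(α / β) * c ^ (-(1 : ℝ) / 2) * δ) ^ 2) := by gcongr
    _ = c * (β * (α / β * c⁻¹ * δ ^ 2)) := by
        rw [mul_pow, mul_pow, Real.sq_sqrt (by positivity), hc_sq]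
    _ = α * δ ^ 2 := by field_simp

theorem lt_of_le_mul_of_lt_sqrt_div_mul {α β c δ x x₀ v v₀ : ℝ} (hα : 0 < α) (hβ : 0 < β)
    (hc : 0 < c) (hδ : 0 ≤ δ) (hx₀ : 0 ≤ x₀) (hv : α * x ^ 2 ≤ v) (hv₀ : v₀ ≤ β * x₀ ^ 2)
    (hvv₀ : v ≤ c * v₀) (h : x₀ < √(α / β) * c ^ (-(1 : ℝ) / 2) * δ) : x < δ := by
  have hsq : α * x ^ 2 < α * δ ^ 2 := calc
    α * x ^ 2 ≤ c * v₀ := hv.trans hvv₀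
    _ ≤ c * (β * x₀ ^ 2) := by gcongr
    _ < α * δ ^ 2 := mul_sq_lt_mul_sq_of_lt_sqrt_div_mul hα.le hβ hc hx₀ h
  exact lt_of_pow_lt_pow_left₀ 2 hδ (lt_of_mul_lt_mul_left hsq hα.le)

theorem tendsto_zero_of_mul_sq_le_geometric {α C q : ℝ} {s : ℕ → ℝ} (hα : 0 < α) (hq₀ : 0 ≤ q)
    (hq₁ : q < 1) (h : ∀ k, α * s k ^ 2 ≤ C * q ^ k) : Tendsto s atTop (𝓝 0) := by
  have hsqrt : Tendsto (fun k : ℕ ↦ √(C * q ^ k / α)) atTop (𝓝 0) := by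
    simpa using (((tendsto_pow_atTop_nhds_zero_of_lt_one hq₀ hq₁).const_mul C).div_const α).sqrt
  refine squeeze_zero_norm (fun k ↦ ?_) hsqrt
  exact Real.abs_le_sqrt ((le_div_iff₀' hα).2 (h k))

end Analysis

section Switching

theorem lossCount_succ (θ : ℕ → ℕ) (k : ℕ) :
    lossCount θ (k + 1) = lossCount θ k + if θ k = 1 then 1 else 0 := by
  simp only [lossCount, card_filter, sum_range_succ]

theorem switchCount_succ (θ : ℕ → ℕ) (k : ℕ) :
    switchCount θ (k + 1) = switchCount θ k + if θ k = 0 ∧ θ (k + 1) = 1 then 1 else 0 := by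
  simp only [switchCount, card_filter, sum_range_succ]

/-- The factor by which the switched recursion bounds `W (k + 1) / W k`: the rate `ω` of the mode
at time `k`, multiplied by the jump factor `μ` of that mode when it is left at time `k + 1`. -/
def stepGain (θ : ℕ → ℕ) (μ₀ μ₁ ω₀ ω₁ : ℝ) (k : ℕ) : ℝ :=
  (if θ (k + 1) = θ k then 1 else if θ k = 0 then μ₀ else μ₁) * (if θ k = 0 then ω₀ else ω₁)

variable {θ : ℕ → ℕ} {μ₀ μ₁ ω₀ ω₁ : ℝ}

theorem stepGain_nonneg (hμ₀ : 0 ≤ μ₀) (hμ₁ : 0 ≤ μ₁) (hω₀ : 0 ≤ ω₀) (hω₁ : 0 ≤ ω₁) (k : ℕ) :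
    0 ≤ stepGain θ μ₀ μ₁ ω₀ ω₁ k := by
  unfold stepGain
  split_ifs <;> positivity

theorem mode_weight_succ_mul_stepGain (hθ : ∀ k, θ k = 0 ∨ θ k = 1) (hω₀ : ω₀ ≠ 0) (k : ℕ) :
    (if θ (k + 1) = 0 then 1 else μ₁) * stepGain θ μ₀ μ₁ ω₀ ω₁ k =
      (if θ k = 0 then 1 else μ₁) * (μ₀ * μ₁) ^ (if θ k = 0 ∧ θ (k + 1) = 1 then 1 else 0) *
        (ω₁ / ω₀) ^ (if θ k = 1 then 1 else 0) * ω₀ := by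
  rcases hθ k with hk | hk <;> rcases hθ (k + 1) with hk' | hk' <;>
    simp [stepGain, hk, hk', hω₀, mul_assoc, mul_left_comm μ₁ μ₀]

-- The weight `μ₁` prepays the return switch: it is collected on entering mode `1` and released on
-- leaving it, which makes this an equality rather than a bound.
theorem mode_weight_mul_prod_stepGain (hθ : ∀ k, θ k = 0 ∨ θ k = 1) (hθ0 : θ 0 = 0)
    (hω₀ : ω₀ ≠ 0) (k : ℕ) :
    (if θ k = 0 then 1 else μ₁) * ∏ j ∈ range k, stepGain θ μ₀ μ₁ ω₀ ω₁ j =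
      (μ₀ * μ₁) ^ switchCount θ k * (ω₁ / ω₀) ^ lossCount θ k * ω₀ ^ k := by
  induction k with
  | zero => simp [hθ0, switchCount, lossCount]
  | succ k ih =>
    rw [prod_range_succ, switchCount_succ, lossCount_succ, pow_add, pow_add, pow_succ]
    linear_combination
      (∏ j ∈ range k, stepGain θ μ₀ μ₁ ω₀ ω₁ j) *
        mode_weight_succ_mul_stepGain (μ₀ := μ₀) (μ₁ := μ₁) (ω₁ := ω₁) hθ hω₀ k +
      (μ₀ * μ₁) ^ (if θ k = 0 ∧ θ (k + 1) = 1 then 1 else 0) *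
        (ω₁ / ω₀) ^ (if θ k = 1 then 1 else 0) * ω₀ * ih

theorem prod_stepGain_le (hθ : ∀ k, θ k = 0 ∨ θ k = 1) (hθ0 : θ 0 = 0) (hμ₀ : 0 ≤ μ₀)
    (hμ₁ : 1 ≤ μ₁) (hω₀ : 0 < ω₀) (hω₁ : 0 ≤ ω₁) (k : ℕ) :
    ∏ j ∈ range k, stepGain θ μ₀ μ₁ ω₀ ω₁ j ≤
      (μ₀ * μ₁) ^ switchCount θ k * (ω₁ / ω₀) ^ lossCount θ k * ω₀ ^ k := by
  have hprod : 0 ≤ ∏ j ∈ range k, stepGain θ μ₀ μ₁ ω₀ ω₁ j :=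
    prod_nonneg fun j _ ↦ stepGain_nonneg hμ₀ (zero_le_one.trans hμ₁) hω₀.le hω₁ j
  rw [← mode_weight_mul_prod_stepGain hθ hθ0 hω₀.ne']
  refine le_mul_of_one_le_left hprod ?_
  split_ifs
  exacts [le_rfl, hμ₁]

end Switching

theorem stmt5_general {θ : ℕ → ℕ} (hθ : ∀ k, θ k = 0 ∨ θ k = 1) (hθ0 : θ 0 = 0)
    {μ₀ μ₁ ω₀ ω₁ κF ρF κs ρs α β δ : ℝ} (hμ₁ : 1 ≤ μ₁) (hμ : 1 ≤ μ₀ * μ₁)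
    (hω₀ : 0 < ω₀) (hω₀₁ : ω₀ ≤ ω₁) (hα : 0 < α) (hβ : 0 < β) (hδ : 0 ≤ δ)
    {W s : ℕ → ℝ} (hs : 0 ≤ s 0) (hWlow : ∀ k, α * s k ^ 2 ≤ W k) (hWhigh : W 0 ≤ β * s 0 ^ 2)
    (hrec_same : ∀ k, s k ≤ δ → θ (k + 1) = θ k →
      W (k + 1) ≤ (if θ k = 0 then ω₀ else ω₁) * W k)
    (hrec_switch : ∀ k, s k ≤ δ → θ (k + 1) ≠ θ k →
      W (k + 1) ≤ (if θ k = 0 then μ₀ else μ₁) * (if θ k = 0 then ω₀ else ω₁) * W k)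
    (hS : ∀ k : ℕ, (switchCount θ k : ℝ) ≤ κF + ρF * k)
    (hχ : ∀ k : ℕ, (lossCount θ k : ℝ) ≤ κs + ρs * k)
    (hω : (μ₀ * μ₁) ^ ρF * ω₀ ^ (1 - ρs) * ω₁ ^ ρs < 1)
    (hs0 : s 0 < √(α / β) * ((μ₀ * μ₁) ^ κF * (ω₁ / ω₀) ^ κs) ^ (-(1 : ℝ) / 2) * δ) :
    (∀ k : ℕ, s k < δ) ∧
    (∀ k : ℕ, W k ≤ ((μ₀ * μ₁) ^ κF * (ω₁ / ω₀) ^ κs) *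
      ((μ₀ * μ₁) ^ ρF * ω₀ ^ (1 - ρs) * ω₁ ^ ρs) ^ k * W 0) ∧
    Tendsto s atTop (𝓝 0) := by
  have hμ₀ : 0 < μ₀ := pos_of_mul_pos_left (one_pos.trans_le hμ) (zero_le_one.trans hμ₁)
  have hω₁ : 0 < ω₁ := hω₀.trans_le hω₀₁
  have hW0 : 0 ≤ W 0 := le_trans (by positivity) (hWlow 0)
  have hgain k := (prod_stepGain_le hθ hθ0 hμ₀.le hμ₁ hω₀ hω₁.le k).trans
    (pow_mul_div_pow_mul_pow_le hμ hω₀ hω₀₁ (hS k) (hχ k))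
  set c := (μ₀ * μ₁) ^ κF * (ω₁ / ω₀) ^ κs
  set ω := (μ₀ * μ₁) ^ ρF * ω₀ ^ (1 - ρs) * ω₁ ^ ρs
  have hc : 0 < c := by positivity
  have hω_nonneg : 0 ≤ ω := by positivity
  have hW_of_prod k (hk : W k ≤ (∏ j ∈ range k, stepGain θ μ₀ μ₁ ω₀ ω₁ j) * W 0) :
      W k ≤ c * ω ^ k * W 0 := hk.trans (mul_le_mul_of_nonneg_right (hgain k) hW0)
  have hlt k (hk : W k ≤ c * ω ^ k * W 0) : s k < δ := by
    refine lt_of_le_mul_of_lt_sqrt_div_mul hα hβ hc hδ hs (hWlow k) hWhigh (hk.trans ?_) hs0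
    gcongr
    exact mul_le_of_le_one_right hc.le (pow_le_one₀ hω_nonneg hω.le)
  have hstep k (hk : s k ≤ δ) : W (k + 1) ≤ stepGain θ μ₀ μ₁ ω₀ ω₁ k * W k := by
    by_cases h : θ (k + 1) = θ k
    · simpa only [stepGain, if_pos h, one_mul] using hrec_same k hk h
    · simpa only [stepGain, if_neg h] using hrec_switch k hk h
  have hW k : W k ≤ c * ω ^ k * W 0 := hW_of_prod k <| le_prod_range_mul_of_local_step
    (stepGain_nonneg hμ₀.le (zero_le_one.trans hμ₁) hω₀.le hω₁.le) hstep
    (fun j hj ↦ (hlt j (hW_of_prod j hj)).le) k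
  refine ⟨fun k ↦ hlt k (hW k), hW, ?_⟩
  refine tendsto_zero_of_mul_sq_le_geometric (C := c * W 0) hα hω_nonneg hω fun k ↦ ?_
  exact (hWlow k).trans ((hW k).trans_eq (by ring))

/-- region-of-attraction bootstrapping: if the Lyapunov recursion
only holds while `s k ≤ δ` and the initial condition is small enough, then the
trajectory never leaves the region and converges. -/
theorem stmt5 (θ : ℕ → ℕ) (hθ : ∀ k, θ k = 0 ∨ θ k = 1) (hθ0 : θ 0 = 0)
    (μ₀ μ₁ ω₀ ω₁ T κF ρF κs ρs α β δ : ℝ)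
    (hμ₀ : 1 ≤ μ₀) (hμ₁ : 1 ≤ μ₁) (hω₀ : 0 < ω₀) (hω₀1 : ω₀ < 1) (hω₁ : 1 ≤ ω₁)
    (hT : 0 < T) (hκF : 0 ≤ κF) (hρF : 0 ≤ ρF) (hκs : 0 ≤ κs) (hρs : 0 ≤ ρs)
    (hα : 0 < α) (hαβ : α ≤ β) (hδ : 0 < δ)
    (W s : ℕ → ℝ) (hs : ∀ k, 0 ≤ s k)
    (hWlow : ∀ k, α * s k ^ 2 ≤ W k) (hWhigh : ∀ k, W k ≤ β * s k ^ 2)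
    (hrec_same : ∀ k, s k ≤ δ → θ (k + 1) = θ k →
      W (k + 1) ≤ (if θ k = 0 then ω₀ else ω₁) * W k)
    (hrec_switch : ∀ k, s k ≤ δ → θ (k + 1) ≠ θ k →
      W (k + 1) ≤ (if θ k = 0 then μ₀ else μ₁) * (if θ k = 0 then ω₀ else ω₁) * W k)
    (hS : ∀ k : ℕ, (switchCount θ k : ℝ) ≤ κF + ρF * (k * T))
    (hχ : ∀ k : ℕ, (lossCount θ k : ℝ) ≤ (κs + ρs * (k * T)) / T)
    (hω : (μ₀ * μ₁) ^ (ρF * T) * ω₀ ^ (1 - ρs) * ω₁ ^ ρs < 1)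
    (hs0 : s 0 < Real.sqrt (α / β) *
      ((μ₀ * μ₁) ^ κF * (ω₁ / ω₀) ^ (κs / T)) ^ (-(1 : ℝ) / 2) * δ) :
    (∀ k : ℕ, s k < δ) ∧
    (∀ k : ℕ, W k ≤ ((μ₀ * μ₁) ^ κF * (ω₁ / ω₀) ^ (κs / T)) *
      ((μ₀ * μ₁) ^ (ρF * T) * ω₀ ^ (1 - ρs) * ω₁ ^ ρs) ^ k * W 0) ∧
    Filter.Tendsto s Filter.atTop (nhds 0) :=
  stmt5_general hθ hθ0 hμ₁ (one_le_mul_of_one_le_of_one_le hμ₀ hμ₁) hω₀ (hω₀1.le.trans hω₁) hα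
    (hα.trans_le hαβ) hδ.le (hs 0) hWlow (hWhigh 0) hrec_same hrec_switch
    (fun k ↦ (hS k).trans_eq (by ring)) (fun k ↦ (hχ k).trans_eq (by field_simp)) hω hs0
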